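/- arXiv:math/9805104 — 3 statements merged into one kernel-verified Lean document; each statement's English description precedes it below -/
import Mathlib

section
/- A weak bialgebra A is left-monoidal (i.e. ε(abc) = ε(a b₍₁₎) ε(b₍₂₎ c) for all a, b, c) if and only if for all a in A: a₍₁₎ ⊗ ε_L(a₍₂₎) = a 1₍₁₎ ⊗ ε_L(1₍₂₎), where ε_L(b) ∈ Â is the functional x ↦ ε(b x). -/
open TensorProduct

noncomputable section

variable (K A : Type*) [Field K] [Ring A] [Algebra K A] [Coalgebra K A]

/-- The linear map `a ↦ a ⊗ 1`. -/
def inclL : A →ₗ[K] A ⊗[K] A := (TensorProduct.mk K A A).flip 1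

/-- The linear map `a ↦ 1 ⊗ a`. -/
def inclR : A →ₗ[K] A ⊗[K] A := TensorProduct.mk K A A 1

/-- `ε_LL(a) = ε(a 1₍₁₎) 1₍₂₎`. -/
def eLL : A →ₗ[K] A :=
  (TensorProduct.lid K A).toLinearMap ∘ₗ
    LinearMap.rTensor A (Coalgebra.counit (R := K) (A := A)) ∘ₗ
    LinearMap.mulRight K (Coalgebra.comul (R := K) (1 : A)) ∘ₗ inclL K A

/-- `ε_RR(a) = 1₍₁₎ ε(1₍₂₎ a)`. -/
def eRR : A →ₗ[K] A :=
  (TensorProduct.rid K A).toLinearMap ∘ₗ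
    LinearMap.lTensor A (Coalgebra.counit (R := K) (A := A)) ∘ₗ
    LinearMap.mulLeft K (Coalgebra.comul (R := K) (1 : A)) ∘ₗ inclR K A

/-- `ε_LR(a) = ε(1₍₁₎ a) 1₍₂₎`. -/
def eLR : A →ₗ[K] A :=
  (TensorProduct.lid K A).toLinearMap ∘ₗ
    LinearMap.rTensor A (Coalgebra.counit (R := K) (A := A)) ∘ₗ
    LinearMap.mulLeft K (Coalgebra.comul (R := K) (1 : A)) ∘ₗ inclL K A

/-- `ε_RL(a) = 1₍₁₎ ε(a 1₍₂₎)`. -/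
def eRL : A →ₗ[K] A :=
  (TensorProduct.rid K A).toLinearMap ∘ₗ
    LinearMap.lTensor A (Coalgebra.counit (R := K) (A := A)) ∘ₗ
    LinearMap.mulRight K (Coalgebra.comul (R := K) (1 : A)) ∘ₗ inclR K A

/-- Convolution product: `(conv f g)(a) = f(a₍₁₎) g(a₍₂₎)` (implicit Sweedler sums). -/
def conv (f g : A →ₗ[K] A) : A →ₗ[K] A :=
  LinearMap.mul' K A ∘ₗ TensorProduct.map f g ∘ₗ Coalgebra.comul (R := K)

/-- Opposite convolution: `(copConv f g)(a) = f(a₍₂₎) g(a₍₁₎)`. -/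
def copConv (f g : A →ₗ[K] A) : A →ₗ[K] A :=
  LinearMap.mul' K A ∘ₗ TensorProduct.map f g ∘ₗ
    (TensorProduct.comm K A A).toLinearMap ∘ₗ Coalgebra.comul (R := K)

/-- `ε ⊗ ε` as a functional on `A ⊗ A`. -/
def pairCC : A ⊗[K] A →ₗ[K] K :=
  (TensorProduct.lid K K).toLinearMap ∘ₗ
    TensorProduct.map (Coalgebra.counit (R := K) (A := A)) (Coalgebra.counit (R := K) (A := A))

/-- `a ↦ ε(a)·1`. -/
def epsUnit : A →ₗ[K] A := Algebra.linearMap K A ∘ₗ Coalgebra.counit (R := K)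

/-- `b ↦ (x ↦ ε(b x))`, i.e. the map `ε_L : A → Â`. -/
def epsLfun : A →ₗ[K] A →ₗ[K] K :=
  LinearMap.llcomp K A A K (Coalgebra.counit (R := K) (A := A)) ∘ₗ LinearMap.mul K A

/-- The weak-bialgebra axiom: the coproduct is multiplicative. -/
def WeakBialg : Prop :=
  ∀ a b : A, Coalgebra.comul (R := K) (a * b) =
    Coalgebra.comul (R := K) a * Coalgebra.comul (R := K) b

/-- `ε(abc) = ε(a b₍₁₎) ε(b₍₂₎ c)` for all `a b c`. -/
def LeftMonoidal : Prop :=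
  ∀ a b c : A, Coalgebra.counit (R := K) (a * b * c) =
    pairCC K A ((a ⊗ₜ[K] (1 : A)) * Coalgebra.comul (R := K) b * ((1 : A) ⊗ₜ[K] c))

/-- `ε(abc) = ε(a b₍₂₎) ε(b₍₁₎ c)` for all `a b c`. -/
def RightMonoidal : Prop :=
  ∀ a b c : A, Coalgebra.counit (R := K) (a * b * c) =
    pairCC K A ((a ⊗ₜ[K] (1 : A)) *
      (TensorProduct.comm K A A (Coalgebra.comul (R := K) b)) * ((1 : A) ⊗ₜ[K] c))

/-- `(Δ(1) ⊗ 1)(1 ⊗ Δ(1)) = (Δ ⊗ id)(Δ(1))`. -/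
def LeftComonoidal : Prop :=
  ((Coalgebra.comul (R := K) (1 : A)) ⊗ₜ[K] (1 : A)) *
      ((TensorProduct.assoc K A A A).symm ((1 : A) ⊗ₜ[K] Coalgebra.comul (R := K) (1 : A))) =
    LinearMap.rTensor A (Coalgebra.comul (R := K)) (Coalgebra.comul (R := K) (1 : A))

/-- `(1 ⊗ Δ(1))(Δ(1) ⊗ 1) = (Δ ⊗ id)(Δ(1))`. -/
def RightComonoidal : Prop :=
  ((TensorProduct.assoc K A A A).symm ((1 : A) ⊗ₜ[K] Coalgebra.comul (R := K) (1 : A))) *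
      ((Coalgebra.comul (R := K) (1 : A)) ⊗ₜ[K] (1 : A)) =
    LinearMap.rTensor A (Coalgebra.comul (R := K)) (Coalgebra.comul (R := K) (1 : A))

/-- `N_LL(A) = {a | Δ(a) = a 1₍₁₎ ⊗ 1₍₂₎}`. -/
def NLL : Set A :=
  {a : A | Coalgebra.comul (R := K) a =
    (a ⊗ₜ[K] (1 : A)) * Coalgebra.comul (R := K) (1 : A)}

/-- `N_LR(A) = {a | Δ(a) = 1₍₁₎ a ⊗ 1₍₂₎}`. -/
def NLR : Set A :=
  {a : A | Coalgebra.comul (R := K) a =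
    Coalgebra.comul (R := K) (1 : A) * (a ⊗ₜ[K] (1 : A))}

/-- `N_RL(A) = {a | Δ(a) = 1₍₁₎ ⊗ a 1₍₂₎}`. -/
def NRL : Set A :=
  {a : A | Coalgebra.comul (R := K) a =
    ((1 : A) ⊗ₜ[K] a) * Coalgebra.comul (R := K) (1 : A)}

/-- `N_RR(A) = {a | Δ(a) = 1₍₁₎ ⊗ 1₍₂₎ a}`. -/
def NRR : Set A :=
  {a : A | Coalgebra.comul (R := K) a =
    Coalgebra.comul (R := K) (1 : A) * ((1 : A) ⊗ₜ[K] a)}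

/-- A subset which is a unital subalgebra. -/
def IsUnitalSub (S : Set A) : Prop :=
  (1 : A) ∈ S ∧ (∀ x ∈ S, ∀ y ∈ S, x * y ∈ S) ∧ (∀ x ∈ S, ∀ y ∈ S, x + y ∈ S) ∧
    ∀ (k : K), ∀ x ∈ S, k • x ∈ S

/-- `A_L = {φ(1₍₁₎) 1₍₂₎ : φ ∈ Â}`. -/
def ALset : Set A :=
  {x : A | ∃ φ : A →ₗ[K] K,
    x = (TensorProduct.lid K A) (LinearMap.rTensor A φ (Coalgebra.comul (R := K) (1 : A)))}

/-- `A_R = {φ(1₍₂₎) 1₍₁₎ : φ ∈ Â}`. -/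
def ARset : Set A :=
  {x : A | ∃ φ : A →ₗ[K] K,
    x = (TensorProduct.rid K A) (LinearMap.lTensor A φ (Coalgebra.comul (R := K) (1 : A)))}

/-! For a functional `f` on `A` write `f ⇀ b = f(b₍₂₎) b₍₁₎`, and take `f = ε(· c)`.
Left-monoidality says that `f(a b) = ε(a (f ⇀ b))` for every `c`, while evaluating the second
tensor factor at `c` turns the other condition into `f ⇀ a = a (f ⇀ 1)`. These are equivalent for
each single functional `f`. If the second holds, both sides of the first are `ε(f ⇀ (a b))`. If the
first holds, then, since `f ⇀ ·` is left colinear and `Δ` is multiplicative,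
`f ⇀ a = a₍₁₎ 1₍₁₎ f(a₍₂₎ 1₍₂₎) = a₍₁₎ 1₍₁₎ ε(a₍₂₎ (f ⇀ 1₍₂₎))
  = (id ⊗ ε)(Δ(a (f ⇀ 1))) = a (f ⇀ 1)`.
-/

section Slice

variable {R M M' N P : Type*} [CommSemiring R] [AddCommMonoid M] [Module R M]
  [AddCommMonoid M'] [Module R M'] [AddCommMonoid N] [Module R N] [AddCommMonoid P] [Module R P]

/-- The slice map `id ⊗ f : M ⊗ N → M`, `m ⊗ n ↦ f(n) m`, of a functional `f` on the right
tensor factor. -/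
def rightSlice (f : N →ₗ[R] R) : M ⊗[R] N →ₗ[R] M :=
  (TensorProduct.rid R M).toLinearMap ∘ₗ LinearMap.lTensor M f

@[simp]
theorem rightSlice_tmul (f : N →ₗ[R] R) (m : M) (n : N) :
    rightSlice f (m ⊗ₜ[R] n) = f n • m := by
  simp [rightSlice]

theorem map_rightSlice (g : M →ₗ[R] M') (f : N →ₗ[R] R) (t : M ⊗[R] N) :
    g (rightSlice f t) = rightSlice f (LinearMap.rTensor N g t) := by
  induction t with
  | zero => simp
  | add s t hs ht => simp only [map_add, hs, ht]
  | tmul m n => simp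

theorem rightSlice_assoc_symm (f : P →ₗ[R] R) (t : M ⊗[R] (N ⊗[R] P)) :
    rightSlice f ((TensorProduct.assoc R M N P).symm t) = LinearMap.lTensor M (rightSlice f) t := by
  have h : rightSlice f ∘ₗ (TensorProduct.assoc R M N P).symm.toLinearMap =
      LinearMap.lTensor M (rightSlice f) := by
    ext m n p
    simp
  exact LinearMap.congr_fun h t

theorem equivFinsuppOfBasisLeft_lTensor_apply {ι : Type*} [DecidableEq ι] (b : Module.Basis ι R M)
    (φ : N →ₗ[R] P →ₗ[R] R) (t : M ⊗[R] N) (i : ι) (p : P) :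
    equivFinsuppOfBasisLeft b (LinearMap.lTensor M φ t) i p =
      b.coord i (rightSlice (φ.flip p) t) := by
  induction t with
  | zero => simp
  | add s t hs ht => simp only [map_add, Finsupp.add_apply, LinearMap.add_apply, hs, ht]
  | tmul m n => simp [mul_comm]

theorem lTensor_eq_lTensor_iff_rightSlice_flip [Module.Free R M] (φ : N →ₗ[R] P →ₗ[R] R)
    (s t : M ⊗[R] N) :
    LinearMap.lTensor M φ s = LinearMap.lTensor M φ t ↔
      ∀ p, rightSlice (φ.flip p) s = rightSlice (φ.flip p) t := by
  classical
  let b := Module.Free.chooseBasis R M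
  rw [← (equivFinsuppOfBasisLeft b).injective.eq_iff, Finsupp.ext_iff]
  simp only [LinearMap.ext_iff, equivFinsuppOfBasisLeft_lTensor_apply, b.ext_elem_iff,
    Module.Basis.coord_apply]
  exact forall_comm

end Slice

section MulSlice

variable {R A B : Type*} [CommSemiring R] [Semiring A] [Algebra R A] [Semiring B] [Algebra R B]

theorem rightSlice_tmul_one_mul (f : B →ₗ[R] R) (a : A) (t : A ⊗[R] B) :
    rightSlice f ((a ⊗ₜ[R] (1 : B)) * t) = a * rightSlice f t := by
  induction t with
  | zero => simp
  | add s t hs ht => simp only [map_add, mul_add, hs, ht]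
  | tmul x y => simp

theorem rightSlice_mul_of_apply_mul {f g : B →ₗ[R] R} {T : B →ₗ[R] B}
    (h : ∀ x y, f (x * y) = g (x * T y)) (s t : A ⊗[R] B) :
    rightSlice f (s * t) = rightSlice g (s * LinearMap.lTensor A T t) := by
  induction s with
  | zero => simp
  | add s₁ s₂ h₁ h₂ => simp only [add_mul, map_add, h₁, h₂]
  | tmul a x =>
    induction t with
    | zero => simp
    | add t₁ t₂ h₁ h₂ => simp only [mul_add, map_add, h₁, h₂]
    | tmul b y => simp [h]

end MulSlice

section LeftHit

open Coalgebra

variable {R C : Type*} [CommSemiring R] [AddCommMonoid C] [Module R C] [Coalgebra R C]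

/-- The left hit action `f ⇀ x = f(x₍₂₎) x₍₁₎` of a functional `f` on a coalgebra. -/
def leftHit (f : C →ₗ[R] R) : C →ₗ[R] C := rightSlice f ∘ₗ comul

theorem leftHit_apply (f : C →ₗ[R] R) (x : C) : leftHit f x = rightSlice f (comul x) := rfl

theorem leftHit_counit (x : C) : leftHit (counit (R := R)) x = x := by
  simp [leftHit, rightSlice]

theorem counit_leftHit (f : C →ₗ[R] R) (x : C) : counit (R := R) (leftHit f x) = f x := by
  simp [leftHit_apply, map_rightSlice]

theorem comul_leftHit (f : C →ₗ[R] R) (x : C) :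
    comul (R := R) (leftHit f x) = LinearMap.lTensor C (leftHit f) (comul x) := by
  rw [leftHit_apply, map_rightSlice, ← coassoc_symm_apply, rightSlice_assoc_symm, leftHit,
    LinearMap.lTensor_comp_apply]

end LeftHit

section MultiplicativeComul

open Coalgebra

variable {R A : Type*} [CommSemiring R] [Semiring A] [Algebra R A] [Coalgebra R A]

theorem leftHit_eq_mul_leftHit_one
    (hΔ : ∀ a b : A, comul (R := R) (a * b) = comul (R := R) a * comul (R := R) b)
    {f : A →ₗ[R] R} (hf : ∀ a b, f (a * b) = counit (R := R) (a * leftHit f b)) (a : A) :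
    leftHit f a = a * leftHit f 1 :=
  calc leftHit f a
    _ = rightSlice f (comul (R := R) a * comul (R := R) 1) := by rw [← hΔ, mul_one, leftHit_apply]
    _ = rightSlice counit (comul (R := R) a * comul (R := R) (leftHit f 1)) := by
      rw [rightSlice_mul_of_apply_mul hf, comul_leftHit]
    _ = a * leftHit f 1 := by rw [← hΔ, ← leftHit_apply, leftHit_counit]

theorem apply_mul_of_leftHit_eq_mul {f : A →ₗ[R] R} (hf : ∀ a, leftHit f a = a * leftHit f 1)
    (a b : A) : f (a * b) = counit (R := R) (a * leftHit f b) := by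
  rw [← counit_leftHit f (a * b), hf (a * b), hf b, mul_assoc]

end MultiplicativeComul

section LeftMonoidal

variable {K A}

theorem pairCC_tmul_one_mul_mul_one_tmul (a c : A) (t : A ⊗[K] A) :
    pairCC K A ((a ⊗ₜ[K] (1 : A)) * t * ((1 : A) ⊗ₜ[K] c)) =
      Coalgebra.counit (R := K) (a * rightSlice ((epsLfun K A).flip c) t) := by
  induction t with
  | zero => simp
  | add s t hs ht => simp only [map_add, mul_add, add_mul, hs, ht]
  | tmul x y => simp [pairCC, epsLfun, mul_comm]

theorem leftMonoidal_iff_epsLfun_flip_apply_mul :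
    LeftMonoidal K A ↔ ∀ c a b : A, (epsLfun K A).flip c (a * b) =
      Coalgebra.counit (R := K) (a * leftHit ((epsLfun K A).flip c) b) := by
  simp only [LeftMonoidal, pairCC_tmul_one_mul_mul_one_tmul, leftHit_apply]
  exact ⟨fun h c a b => h a b c, fun h a b c => h c a b⟩

end LeftMonoidal

theorem stmt2_general (hΔ : WeakBialg K A) :
    LeftMonoidal K A ↔
      ∀ a : A,
        LinearMap.lTensor A (epsLfun K A) (Coalgebra.comul (R := K) a) =
        LinearMap.lTensor A (epsLfun K A)
          ((a ⊗ₜ[K] (1 : A)) * Coalgebra.comul (R := K) (1 : A)) := by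
  simp only [lTensor_eq_lTensor_iff_rightSlice_flip, rightSlice_tmul_one_mul, ← leftHit_apply,
    leftMonoidal_iff_epsLfun_flip_apply_mul]
  exact ⟨fun h a c => leftHit_eq_mul_leftHit_one hΔ (h c) a,
    fun h c => apply_mul_of_leftHit_eq_mul fun a => h a c⟩

/-- `A` is left-monoidal iff
`a₍₁₎ ⊗ ε_L(a₍₂₎) = a 1₍₁₎ ⊗ ε_L(1₍₂₎)` for all `a`. -/
theorem stmt2 [FiniteDimensional K A] (hΔ : WeakBialg K A) :
    LeftMonoidal K A ↔
      ∀ a : A,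
        LinearMap.lTensor A (epsLfun K A) (Coalgebra.comul (R := K) a) =
        LinearMap.lTensor A (epsLfun K A)
          ((a ⊗ₜ[K] (1 : A)) * Coalgebra.comul (R := K) (1 : A)) :=
  stmt2_general K A hΔ
end
end

section
/- Let A be a right-comonoidal weak bialgebra (i.e. (1 ⊗ Δ(1))(Δ(1) ⊗ 1) equals the iterated coproduct of 1) and S an anti-multiplicative pre-antipode on A. Then S is an antipode: S(a₍₁₎) a₍₂₎ S(a₍₃₎) = S(a) for all a. -/
open TensorProduct

noncomputable section

variable (K A : Type*) [Field K] [Ring A] [Algebra K A] [Coalgebra K A]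

/-!
Convolution is associative, so `S * id * S = S * ε_LR`. Right-comonoidality gives
`a₍₁₎ ⊗ ε_LR(a₍₂₎) = 1₍₁₎ a ⊗ 1₍₂₎`, and anti-multiplicativity turns this into
`(S * ε_LR)(a) = S(a) (S * id)(1)`. The factor `(S * id)(1)` equals `1`: the element
`1₍₁₎ S(1₍₂₎) 1₍₃₎` is `(id * S)(1) (S * id)(1) = (S * id)(1)` when the iterated coproduct of `1`
is expanded by right-comonoidality, but it is also `(ε_LR * id)(1) = 1`.
-/

section

open Coalgebra

variable {K A}

lemma conv_apply (f g : A →ₗ[K] A) (a : A) :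
    conv K A f g a = LinearMap.mul' K A (TensorProduct.map f g (comul a)) :=
  rfl

lemma conv_assoc (f g h : A →ₗ[K] A) : conv K A (conv K A f g) h = conv K A f (conv K A g h) :=
  congrArg WithConv.ofConv
    (mul_assoc (WithConv.toConv f) (WithConv.toConv g) (WithConv.toConv h))

lemma comul_one_mul_comul (hΔ : WeakBialg K A) (a : A) :
    comul (R := K) (1 : A) * comul a = comul a := by
  rw [← hΔ, one_mul]

lemma rTensor_comul_mul_comul_tmul_one (hΔ : WeakBialg K A) (x : A ⊗[K] A) (a : A) :
    LinearMap.rTensor A (comul (R := K)) x * (comul (R := K) a ⊗ₜ[K] (1 : A)) =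
      LinearMap.rTensor A (comul (R := K)) (x * (a ⊗ₜ[K] (1 : A))) := by
  induction x with
  | zero => simp
  | add x y hx hy => simp only [map_add, add_mul, hx, hy]
  | tmul b c => simp [hΔ b a]

lemma eLR_apply (a : A) :
    eLR K A a = TensorProduct.lid K A
      (LinearMap.rTensor A (counit (R := K)) (comul (R := K) (1 : A) * (a ⊗ₜ[K] (1 : A)))) :=
  rfl

lemma eLR_one : eLR K A 1 = 1 := by
  rw [eLR_apply, ← Algebra.TensorProduct.one_def, mul_one, rTensor_counit_comul,
    TensorProduct.lid_tmul, one_smul]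

lemma mul'_map_eLR_id (x : A ⊗[K] A) :
    LinearMap.mul' K A (TensorProduct.map (eLR K A) LinearMap.id x) =
      TensorProduct.lid K A
        (LinearMap.rTensor A (counit (R := K)) (comul (R := K) (1 : A) * x)) := by
  induction x with
  | zero => simp
  | add x y hx hy => simp only [map_add, mul_add, hx, hy]
  | tmul b c =>
    simp only [TensorProduct.map_tmul, LinearMap.mul'_apply, LinearMap.id_apply, eLR_apply]
    induction comul (R := K) (1 : A) with
    | zero => simp
    | add x y hx hy => simp only [map_add, add_mul, hx, hy]
    | tmul p q => simp

lemma conv_eLR_id (hΔ : WeakBialg K A) : conv K A (eLR K A) LinearMap.id = LinearMap.id := by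
  ext a
  calc conv K A (eLR K A) LinearMap.id a
      = TensorProduct.lid K A
          (LinearMap.rTensor A (counit (R := K)) (comul (R := K) (1 : A) * comul a)) :=
        mul'_map_eLR_id _
    _ = a := by simp [comul_one_mul_comul hΔ]

variable (K A) in
/-- The contraction `id ⊗ ε ⊗ id` of the middle factor of `A ⊗ A ⊗ A`, used to recover `ε_LR` from
the right-comonoidality equation. -/
def counitMiddle : (A ⊗[K] A) ⊗[K] A →ₗ[K] A ⊗[K] A :=
  LinearMap.rTensor A
    ((TensorProduct.rid K A).toLinearMap ∘ₗ LinearMap.lTensor A (counit (R := K)))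

lemma counitMiddle_rTensor_comul (x : A ⊗[K] A) :
    counitMiddle K A (LinearMap.rTensor A (comul (R := K)) x) = x := by
  induction x with
  | zero => simp
  | add x y hx hy => simp only [map_add, hx, hy]
  | tmul a b => simp [counitMiddle]

lemma counitMiddle_assoc_symm_mul_tmul (a b : A) (y : A ⊗[K] A) :
    counitMiddle K A
        ((TensorProduct.assoc K A A A).symm ((1 : A) ⊗ₜ[K] y) * ((a ⊗ₜ[K] b) ⊗ₜ[K] (1 : A))) =
      a ⊗ₜ[K] TensorProduct.lid K A
        (LinearMap.rTensor A (counit (R := K)) (y * (b ⊗ₜ[K] (1 : A)))) := by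
  induction y with
  | zero => simp
  | add y z hy hz => simp only [map_add, add_mul, TensorProduct.tmul_add, hy, hz]
  | tmul c d => simp [counitMiddle, TensorProduct.smul_tmul]

lemma lTensor_eLR (x : A ⊗[K] A) :
    LinearMap.lTensor A (eLR K A) x =
      counitMiddle K A
        ((TensorProduct.assoc K A A A).symm ((1 : A) ⊗ₜ[K] comul (R := K) (1 : A)) *
          (x ⊗ₜ[K] (1 : A))) := by
  induction x with
  | zero => simp
  | add x y hx hy => simp only [map_add, TensorProduct.add_tmul, mul_add, hx, hy]
  | tmul a b => rw [counitMiddle_assoc_symm_mul_tmul, LinearMap.lTensor_tmul, eLR_apply]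

lemma lTensor_eLR_comul (hΔ : WeakBialg K A) (hco : RightComonoidal K A) (a : A) :
    LinearMap.lTensor A (eLR K A) (comul (R := K) a) =
      comul (R := K) (1 : A) * (a ⊗ₜ[K] (1 : A)) := by
  have comul_tmul_one : comul (R := K) a ⊗ₜ[K] (1 : A) =
      (comul (R := K) (1 : A) ⊗ₜ[K] (1 : A)) * (comul (R := K) a ⊗ₜ[K] (1 : A)) := by
    rw [Algebra.TensorProduct.tmul_mul_tmul, comul_one_mul_comul hΔ, one_mul]
  rw [lTensor_eLR, comul_tmul_one, ← mul_assoc, hco, rTensor_comul_mul_comul_tmul_one hΔ,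
    counitMiddle_rTensor_comul]

section AntiMultiplicative

variable {R B C : Type*} [CommSemiring R] [Semiring B] [Algebra R B] [Semiring C] [Algebra R C]
  {S : B →ₗ[R] C}

lemma mul'_map_mul_tmul_one (hanti : ∀ a b : B, S (a * b) = S b * S a)
    (g : B →ₗ[R] C) (x : B ⊗[R] B) (a : B) :
    LinearMap.mul' R C (TensorProduct.map S g (x * (a ⊗ₜ[R] (1 : B)))) =
      S a * LinearMap.mul' R C (TensorProduct.map S g x) := by
  induction x with
  | zero => simp
  | add x y hx hy => simp only [add_mul, map_add, mul_add, hx, hy]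
  | tmul b c => simp [hanti, mul_assoc]

lemma mul'_map_assoc_symm_mul (hanti : ∀ a b : B, S (a * b) = S b * S a)
    (f g : B →ₗ[R] C) (x y : B ⊗[R] B) :
    LinearMap.mul' R C (TensorProduct.map (LinearMap.mul' R C ∘ₗ TensorProduct.map f S) g
        ((TensorProduct.assoc R B B B).symm ((1 : B) ⊗ₜ[R] y) * (x ⊗ₜ[R] (1 : B)))) =
      LinearMap.mul' R C (TensorProduct.map f S x) *
        LinearMap.mul' R C (TensorProduct.map S g y) := by
  induction x with
  | zero => simp
  | add x x' hx hx' => simp only [TensorProduct.add_tmul, mul_add, add_mul, map_add, hx, hx']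
  | tmul a b =>
    induction y with
    | zero => simp
    | add y y' hy hy' => simp only [TensorProduct.tmul_add, mul_add, add_mul, map_add, hy, hy']
    | tmul c d => simp [hanti, mul_assoc]

end AntiMultiplicative

lemma conv_eLR_apply (hΔ : WeakBialg K A) (hco : RightComonoidal K A) {S : A →ₗ[K] A}
    (hanti : ∀ a b : A, S (a * b) = S b * S a) (a : A) :
    conv K A S (eLR K A) a = S a * conv K A S LinearMap.id 1 :=
  calc conv K A S (eLR K A) a
      = LinearMap.mul' K A (TensorProduct.map S LinearMap.id
          (LinearMap.lTensor A (eLR K A) (comul (R := K) a))) := by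
        rw [LinearMap.map_lTensor, LinearMap.id_comp, conv_apply]
    _ = S a * conv K A S LinearMap.id 1 := by
        rw [lTensor_eLR_comul hΔ hco, mul'_map_mul_tmul_one hanti, conv_apply]

lemma conv_conv_apply_one (hco : RightComonoidal K A) {S : A →ₗ[K] A}
    (hanti : ∀ a b : A, S (a * b) = S b * S a) (f g : A →ₗ[K] A) :
    conv K A (conv K A f S) g 1 = conv K A f S 1 * conv K A S g 1 :=
  calc conv K A (conv K A f S) g 1
      = LinearMap.mul' K A (TensorProduct.map (LinearMap.mul' K A ∘ₗ TensorProduct.map f S) g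
          (LinearMap.rTensor A (comul (R := K)) (comul (R := K) (1 : A)))) := by
        rw [LinearMap.map_rTensor]; rfl
    _ = conv K A f S 1 * conv K A S g 1 := by
        rw [← hco, mul'_map_assoc_symm_mul hanti, conv_apply, conv_apply]

lemma conv_id_apply_one (hΔ : WeakBialg K A) (hco : RightComonoidal K A) {S : A →ₗ[K] A}
    (hright : conv K A LinearMap.id S = eLR K A)
    (hanti : ∀ a b : A, S (a * b) = S b * S a) :
    conv K A S LinearMap.id 1 = 1 :=
  calc conv K A S LinearMap.id 1
      = conv K A LinearMap.id S 1 * conv K A S LinearMap.id 1 := by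
        rw [hright, eLR_one, one_mul]
    _ = conv K A (conv K A LinearMap.id S) LinearMap.id 1 :=
        (conv_conv_apply_one hco hanti _ _).symm
    _ = 1 := by rw [hright, conv_eLR_id hΔ, LinearMap.id_apply]

theorem stmt16_general (hΔ : WeakBialg K A) (hco : RightComonoidal K A) (S : A →ₗ[K] A)
    (hright : conv K A LinearMap.id S = eLR K A)
    (hanti : ∀ a b : A, S (a * b) = S b * S a) (a : A) :
    conv K A (conv K A S LinearMap.id) S a = S a := by
  rw [conv_assoc, hright, conv_eLR_apply hΔ hco hanti, conv_id_apply_one hΔ hco hright hanti,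
    mul_one]

end

/-- on a right-comonoidal weak bialgebra an anti-multiplicative
pre-antipode is an antipode: `S(a₍₁₎) a₍₂₎ S(a₍₃₎) = S(a)`. -/
theorem stmt16 [FiniteDimensional K A] (hΔ : WeakBialg K A)
    (hco : RightComonoidal K A) (S : A →ₗ[K] A)
    (hpre1 : conv K A LinearMap.id S = eLR K A)
    (hpre2 : conv K A S LinearMap.id = eRL K A)
    (hanti : ∀ a b : A, S (a * b) = S b * S a) :
    ∀ a : A, conv K A (conv K A S LinearMap.id) S a = S a :=
  stmt16_general hΔ hco S hpre1 hanti
end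
end

section
/- Let A be a weak bialgebra with invertible anti-multiplicative pre-antipode S satisfying ε_LR = S ∘ ε_RR and ε_RL = S ∘ ε_LL. Then S⁻¹ is a pode: a₍₂₎ S⁻¹(a₍₁₎) = ε_RR(a), S⁻¹(a₍₂₎) a₍₁₎ = ε_LL(a), and S⁻¹(a₍₃₎) a₍₂₎ S⁻¹(a₍₁₎) = S⁻¹(a) for all a; moreover S is then an antipode. -/
open TensorProduct

noncomputable section

variable (K A : Type*) [Field K] [Ring A] [Algebra K A] [Coalgebra K A]

/-!
An anti-multiplicative map turns `f(a₍₁₎) g(a₍₂₎)` into a product over the opposite coproduct.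
Applying `S⁻¹` to the two pre-antipode identities therefore gives the pode identities, because
`ε_LR = S ∘ ε_RR` and `ε_RL = S ∘ ε_LL`. For the remaining two identities, `Δ(a) Δ(1) = Δ(a)` yields
`a₍₁₎ ε_RL(a₍₂₎) = a` and `a₍₂₎ ε_LL(a₍₁₎) = a`; apply `S⁻¹` to the first and `S` to the second.
-/

/-- A map that reverses products, `f (a b) = f b f a`: the property assumed of an antipode. It is a
predicate on functions, so that it applies to linear maps without changing their codomain to the
opposite algebra. -/
def IsAntimultiplicative {M N : Type*} [Mul M] [Mul N] (f : M → N) : Prop :=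
  ∀ a b : M, f (a * b) = f b * f a

theorem IsAntimultiplicative.of_inverse {M N : Type*} [Mul M] [Mul N] {f : M → N} {g : N → M}
    (hf : IsAntimultiplicative f) (hgf : Function.LeftInverse g f)
    (hfg : Function.RightInverse g f) : IsAntimultiplicative g := fun a b =>
  calc g (a * b) = g (f (g a) * f (g b)) := by rw [hfg a, hfg b]
    _ = g (f (g b * g a)) := by rw [hf]
    _ = g b * g a := hgf _

section TensorProduct

variable {R B C : Type*} [CommSemiring R] [Semiring B] [Algebra R B] [Semiring C] [Algebra R C]

theorem rid_lTensor_tmul_one_mul (φ : C →ₗ[R] R) (b : B) (x : B ⊗[R] C) :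
    TensorProduct.rid R B (LinearMap.lTensor B φ ((b ⊗ₜ[R] 1) * x)) =
      b * TensorProduct.rid R B (LinearMap.lTensor B φ x) := by
  induction x with
  | zero => simp
  | add x y hx hy => simp only [map_add, mul_add, hx, hy]
  | tmul c d => simp

theorem lid_rTensor_one_tmul_mul (φ : B →ₗ[R] R) (c : C) (x : B ⊗[R] C) :
    TensorProduct.lid R C (LinearMap.rTensor C φ ((1 ⊗ₜ[R] c) * x)) =
      c * TensorProduct.lid R C (LinearMap.rTensor C φ x) := by
  induction x with
  | zero => simp
  | add x y hx hy => simp only [map_add, mul_add, hx, hy]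
  | tmul d e => simp

end TensorProduct

section Convolution

variable {K A}

theorem IsAntimultiplicative.comp_conv {P : A →ₗ[K] A} (hP : IsAntimultiplicative P)
    (f g : A →ₗ[K] A) : P ∘ₗ conv K A f g = copConv K A (P ∘ₗ g) (P ∘ₗ f) := by
  have hrev : P ∘ₗ LinearMap.mul' K A ∘ₗ TensorProduct.map f g =
      LinearMap.mul' K A ∘ₗ TensorProduct.map (P ∘ₗ g) (P ∘ₗ f) ∘ₗ
        (TensorProduct.comm K A A).toLinearMap :=
    TensorProduct.ext' fun a b => hP (f a) (g b)
  exact congrArg (· ∘ₗ Coalgebra.comul (R := K)) hrev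

theorem IsAntimultiplicative.comp_copConv {P : A →ₗ[K] A} (hP : IsAntimultiplicative P)
    (f g : A →ₗ[K] A) : P ∘ₗ copConv K A f g = conv K A (P ∘ₗ g) (P ∘ₗ f) := by
  have hrev : P ∘ₗ LinearMap.mul' K A ∘ₗ TensorProduct.map f g ∘ₗ
        (TensorProduct.comm K A A).toLinearMap =
      LinearMap.mul' K A ∘ₗ TensorProduct.map (P ∘ₗ g) (P ∘ₗ f) :=
    TensorProduct.ext' fun a b => hP (f b) (g a)
  exact congrArg (· ∘ₗ Coalgebra.comul (R := K)) hrev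

theorem mul'_map_id_eRL (x : A ⊗[K] A) :
    LinearMap.mul' K A (TensorProduct.map LinearMap.id (eRL K A) x) =
      TensorProduct.rid K A (LinearMap.lTensor A (Coalgebra.counit (R := K) (A := A))
        (x * Coalgebra.comul (R := K) (1 : A))) := by
  induction x with
  | zero => simp
  | add x y hx hy => simp only [map_add, add_mul, hx, hy]
  | tmul a b =>
    have hab : a ⊗ₜ[K] b = (a ⊗ₜ[K] 1) * (1 ⊗ₜ[K] b) := by simp
    rw [hab, mul_assoc, rid_lTensor_tmul_one_mul, ← hab]
    rfl

theorem mul'_map_id_eLL_comm (x : A ⊗[K] A) :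
    LinearMap.mul' K A (TensorProduct.map LinearMap.id (eLL K A) (TensorProduct.comm K A A x)) =
      TensorProduct.lid K A (LinearMap.rTensor A (Coalgebra.counit (R := K) (A := A))
        (x * Coalgebra.comul (R := K) (1 : A))) := by
  induction x with
  | zero => simp
  | add x y hx hy => simp only [map_add, add_mul, hx, hy]
  | tmul a b =>
    have hab : a ⊗ₜ[K] b = (1 ⊗ₜ[K] b) * (a ⊗ₜ[K] 1) := by simp
    rw [hab, mul_assoc, lid_rTensor_one_tmul_mul, ← hab]
    rfl

theorem WeakBialg.comul_mul_comul_one (hΔ : WeakBialg K A) (a : A) :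
    Coalgebra.comul (R := K) a * Coalgebra.comul (R := K) (1 : A) = Coalgebra.comul (R := K) a := by
  rw [← hΔ, mul_one]

theorem WeakBialg.conv_id_eRL (hΔ : WeakBialg K A) :
    conv K A LinearMap.id (eRL K A) = LinearMap.id :=
  LinearMap.ext fun a => (mul'_map_id_eRL _).trans <| by simp [hΔ.comul_mul_comul_one]

theorem WeakBialg.copConv_id_eLL (hΔ : WeakBialg K A) :
    copConv K A LinearMap.id (eLL K A) = LinearMap.id :=
  LinearMap.ext fun a => (mul'_map_id_eLL_comm _).trans <| by simp [hΔ.comul_mul_comul_one]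

theorem WeakBialg.conv_eRL_self (hΔ : WeakBialg K A) {P : A →ₗ[K] A} (hP : IsAntimultiplicative P)
    (hRL : eRL K A = P ∘ₗ eLL K A) : conv K A (eRL K A) P = P :=
  calc conv K A (eRL K A) P = P ∘ₗ copConv K A LinearMap.id (eLL K A) := by
        rw [hP.comp_copConv, LinearMap.comp_id, hRL]
    _ = P := by rw [hΔ.copConv_id_eLL, LinearMap.comp_id]

theorem WeakBialg.copConv_eLL_self (hΔ : WeakBialg K A) {P : A →ₗ[K] A}
    (hP : IsAntimultiplicative P) (hLL : eLL K A = P ∘ₗ eRL K A) : copConv K A (eLL K A) P = P :=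
  calc copConv K A (eLL K A) P = P ∘ₗ conv K A LinearMap.id (eRL K A) := by
        rw [hP.comp_conv, LinearMap.comp_id, hLL]
    _ = P := by rw [hΔ.conv_id_eRL, LinearMap.comp_id]

end Convolution

theorem stmt19_general (hΔ : WeakBialg K A) (S T : A →ₗ[K] A)
    (hTS : T ∘ₗ S = LinearMap.id) (hST : S ∘ₗ T = LinearMap.id)
    (hanti : ∀ a b : A, S (a * b) = S b * S a)
    (hpre1 : conv K A LinearMap.id S = eLR K A)
    (hpre2 : conv K A S LinearMap.id = eRL K A)
    (hLR : eLR K A = S ∘ₗ eRR K A)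
    (hRL : eRL K A = S ∘ₗ eLL K A) :
    (∀ a : A, copConv K A LinearMap.id T a = eRR K A a) ∧
    (∀ a : A, copConv K A T LinearMap.id a = eLL K A a) ∧
    (∀ a : A, copConv K A (copConv K A T LinearMap.id) T a = T a) ∧
    (∀ a : A, conv K A (conv K A S LinearMap.id) S a = S a) := by
  have hT : IsAntimultiplicative T :=
    IsAntimultiplicative.of_inverse hanti (LinearMap.congr_fun hTS) (LinearMap.congr_fun hST)
  have hRR : eRR K A = T ∘ₗ eLR K A := by rw [hLR, ← LinearMap.comp_assoc, hTS, LinearMap.id_comp]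
  have hLL : eLL K A = T ∘ₗ eRL K A := by rw [hRL, ← LinearMap.comp_assoc, hTS, LinearMap.id_comp]
  have hpode₁ : copConv K A LinearMap.id T = eRR K A := by
    rw [hRR, ← hpre1, hT.comp_conv, hTS, LinearMap.comp_id]
  have hpode₂ : copConv K A T LinearMap.id = eLL K A := by
    rw [hLL, ← hpre2, hT.comp_conv, hTS, LinearMap.comp_id]
  rw [hpode₁, hpode₂, hpre2, hΔ.copConv_eLL_self hT hLL, hΔ.conv_eRL_self hanti hRL]
  exact ⟨fun _ => rfl, fun _ => rfl, fun _ => rfl, fun _ => rfl⟩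

/-- if `S` is an invertible anti-multiplicative pre-antipode with
`ε_LR = S ∘ ε_RR` and `ε_RL = S ∘ ε_LL`, then `S⁻¹` is a pode and `S` an antipode. -/
theorem stmt19 [FiniteDimensional K A] (hΔ : WeakBialg K A) (S T : A →ₗ[K] A)
    (hTS : T ∘ₗ S = LinearMap.id) (hST : S ∘ₗ T = LinearMap.id)
    (hanti : ∀ a b : A, S (a * b) = S b * S a)
    (hpre1 : conv K A LinearMap.id S = eLR K A)
    (hpre2 : conv K A S LinearMap.id = eRL K A)
    (hLR : eLR K A = S ∘ₗ eRR K A)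
    (hRL : eRL K A = S ∘ₗ eLL K A) :
    (∀ a : A, copConv K A LinearMap.id T a = eRR K A a) ∧
    (∀ a : A, copConv K A T LinearMap.id a = eLL K A a) ∧
    (∀ a : A, copConv K A (copConv K A T LinearMap.id) T a = T a) ∧
    (∀ a : A, conv K A (conv K A S LinearMap.id) S a = S a) :=
  stmt19_general K A hΔ S T hTS hST hanti hpre1 hpre2 hLR hRL
end
end
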